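/- Let r > 0 be a real number, q ∈ (0,1), c > 0, and define p_t(x,z) as the transition kernel p_Θ with parameter Θ = Θ_t = (1-q)/(e^{ct}-q). Then the family (p_t)_{t>0} satisfies the Chapman–Kolmogorov equations: for all t, s > 0 and all natural numbers x and z, the series ∑_{y=0}^{∞} p_t(x, y) · p_s(y, z) converges and equals p_{t+s}(x, z). -/

import Mathlib

/-- Transition kernel p_Θ(x, z) = ∑_{y=0}^{min(x,z)}
    Γ(z+r)/((z-y)! Γ(y+r)) · [q(1-Θ)]^{z-y} · [1-q(1-Θ)]^{r+y} · C(x,y) Θ^y (1-Θ)^{x-y}. -/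
noncomputable def pKer (r q Θ : ℝ) (x z : ℕ) : ℝ :=
  ∑ y ∈ Finset.range (min x z + 1),
    Real.Gamma ((z : ℝ) + r) / (((z - y).factorial : ℝ) * Real.Gamma ((y : ℝ) + r)) *
      (q * (1 - Θ)) ^ (z - y) * (1 - q * (1 - Θ)) ^ (r + (y : ℝ)) *
      (x.choose y : ℝ) * Θ ^ y * (1 - Θ) ^ (x - y)

/-!
`p_Θ` is a binomial thinning followed by a negative binomial immigration and branching step, so the
row of `x` has generating function `((1 - q φ(u)) / (1 - q u)) ^ r * φ(u) ^ x` with a Möbius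
transformation `φ = φ_Θ`. The first factor is a multiplicative coboundary: it telescopes under
composition of the `φ`s. Hence the Chapman–Kolmogorov equations reduce to the composition law of
the `φ_Θ`. These all fix `1` and `1 / q`, so that `(1 - u) / (1 - q u)` linearises them, with
multiplier `Θ / (1 - q (1 - Θ))`; for `Θ = Θ_t` the multiplier is `exp (-c t)`.
-/

open Set Topology

theorem eq_of_hasSum_mul_pow {𝕜 : Type*} [NontriviallyNormedField 𝕜] {f g : ℕ → 𝕜} {F : 𝕜 → 𝕜}
    (hf : ∀ᶠ u in 𝓝 0, HasSum (fun n ↦ f n * u ^ n) (F u))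
    (hg : ∀ᶠ u in 𝓝 0, HasSum (fun n ↦ g n * u ^ n) (F u)) : f = g := by
  have hasFPowerSeriesAt {h : ℕ → 𝕜} (hh : ∀ᶠ u in 𝓝 0, HasSum (fun n ↦ h n * u ^ n) (F u)) :
      HasFPowerSeriesAt F (FormalMultilinearSeries.ofScalars 𝕜 h) 0 := by
    rw [hasFPowerSeriesAt_iff]
    simpa only [FormalMultilinearSeries.coeff_ofScalars, smul_eq_mul, mul_comm, zero_add] using hh
  exact (FormalMultilinearSeries.ofScalars_series_injective 𝕜 𝕜)
    ((hasFPowerSeriesAt hf).eq_formalMultilinearSeries (hasFPowerSeriesAt hg))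

/-- Nonnegative weights `p` on `ℕ` with generating function `G` on `[-1, 1]`; the weights need not
sum to `1`, and the values of `G` outside `[-1, 1]` are irrelevant. -/
structure HasGenFun (p : ℕ → ℝ) (G : ℝ → ℝ) : Prop where
  nonneg : ∀ n, 0 ≤ p n
  hasSum : ∀ u, |u| ≤ 1 → HasSum (fun n ↦ p n * u ^ n) (G u)

namespace HasGenFun

variable {p p' : ℕ → ℝ} {G G' k ψ : ℝ → ℝ} {Q : ℕ → ℕ → ℝ}

theorem congr (hp : HasGenFun p G) (hG : ∀ u, |u| ≤ 1 → G u = G' u) : HasGenFun p G' where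
  nonneg := hp.nonneg
  hasSum u hu := hG u hu ▸ hp.hasSum u hu

theorem unique (hp : HasGenFun p G) (hp' : HasGenFun p' G) : p = p' := by
  have abs_le_one : ∀ᶠ u : ℝ in 𝓝 0, |u| ≤ 1 := by
    filter_upwards [Metric.closedBall_mem_nhds (0 : ℝ) one_pos] with u hu
    simpa only [Metric.mem_closedBall, dist_zero_right, Real.norm_eq_abs] using hu
  exact eq_of_hasSum_mul_pow (abs_le_one.mono hp.hasSum) (abs_le_one.mono hp'.hasSum)

theorem summable_prod (hp : HasGenFun p G) (hQ : ∀ y, HasGenFun (Q y) fun u ↦ k u * ψ u ^ y)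
    (hψ : |ψ 1| ≤ 1) : Summable fun m : ℕ × ℕ ↦ p m.1 * Q m.1 m.2 := by
  have row_sum (y : ℕ) : HasSum (fun z ↦ p y * Q y z) (k 1 * (p y * ψ 1 ^ y)) := by
    have h := ((hQ y).hasSum 1 abs_one.le).mul_left (p y)
    simp only [one_pow, mul_one] at h
    rwa [mul_left_comm] at h
  rw [summable_prod_of_nonneg fun m ↦ mul_nonneg (hp.nonneg _) ((hQ _).nonneg _)]
  refine ⟨fun y ↦ (row_sum y).summable, ?_⟩
  simpa only [(row_sum _).tsum_eq] using (hp.hasSum _ hψ).summable.mul_left (k 1)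

theorem summable_mul (hp : HasGenFun p G) (hQ : ∀ y, HasGenFun (Q y) fun u ↦ k u * ψ u ^ y)
    (hψ : |ψ 1| ≤ 1) (z : ℕ) : Summable fun y ↦ p y * Q y z :=
  (hp.summable_prod hQ hψ).prod_symm.prod_factor z

theorem mixture (hp : HasGenFun p G) (hQ : ∀ y, HasGenFun (Q y) fun u ↦ k u * ψ u ^ y)
    (hψ : ∀ u, |u| ≤ 1 → |ψ u| ≤ 1) :
    HasGenFun (fun z ↦ ∑' y, p y * Q y z) fun u ↦ k u * G (ψ u) where
  nonneg z := tsum_nonneg fun y ↦ mul_nonneg (hp.nonneg y) ((hQ y).nonneg z)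
  hasSum u hu := by
    have hψ_one := hψ 1 abs_one.le
    have summable : Summable fun m : ℕ × ℕ ↦ p m.1 * Q m.1 m.2 * u ^ m.2 := by
      refine Summable.of_norm_bounded (hp.summable_prod hQ hψ_one) fun m ↦ ?_
      have weight_nonneg := mul_nonneg (hp.nonneg m.1) ((hQ m.1).nonneg m.2)
      rw [norm_mul, Real.norm_of_nonneg weight_nonneg, norm_pow]
      exact mul_le_of_le_one_right weight_nonneg (pow_le_one₀ (norm_nonneg u) hu)
    have sum_rows : HasSum (fun y ↦ p y * (k u * ψ u ^ y))
        (∑' m : ℕ × ℕ, p m.1 * Q m.1 m.2 * u ^ m.2) :=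
      summable.hasSum.prod_fiberwise fun y ↦ by
        simpa only [mul_assoc] using ((hQ y).hasSum u hu).mul_left (p y)
    have sum_columns : HasSum (fun z ↦ (∑' y, p y * Q y z) * u ^ z)
        (∑' m : ℕ × ℕ, p m.1 * Q m.1 m.2 * u ^ m.2) :=
      ((Equiv.prodComm ℕ ℕ).hasSum_iff.2 summable.hasSum).prod_fiberwise fun z ↦
        (hp.summable_mul hQ hψ_one z).hasSum.mul_right (u ^ z)
    have eval_rows : HasSum (fun y ↦ p y * (k u * ψ u ^ y)) (k u * G (ψ u)) := by
      simpa only [mul_left_comm] using (hp.hasSum (ψ u) (hψ u hu)).mul_left (k u)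
    exact sum_rows.unique eval_rows ▸ sum_columns

end HasGenFun

/-- Binomial weights: the law of the number of survivors among `x` individuals, each of which
survives with probability `Θ`. -/
def binomialWeight (Θ : ℝ) (x y : ℕ) : ℝ :=
  x.choose y * Θ ^ y * (1 - Θ) ^ (x - y)

theorem hasSum_binomialWeight_mul_pow (Θ u : ℝ) (x : ℕ) :
    HasSum (fun y ↦ binomialWeight Θ x y * u ^ y) ((Θ * u + (1 - Θ)) ^ x) := by
  have vanish (y : ℕ) (hy : y ∉ Finset.range (x + 1)) : binomialWeight Θ x y * u ^ y = 0 := by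
    have : x < y := by simpa using hy
    simp only [binomialWeight, Nat.choose_eq_zero_of_lt this, Nat.cast_zero, zero_mul]
  suffices h : (Θ * u + (1 - Θ)) ^ x = ∑ y ∈ Finset.range (x + 1), binomialWeight Θ x y * u ^ y from
    h ▸ hasSum_sum_of_ne_finset_zero vanish
  rw [add_pow]
  refine Finset.sum_congr rfl fun y _ ↦ ?_
  rw [binomialWeight]
  ring

theorem hasGenFun_binomialWeight {Θ : ℝ} (hΘ : Θ ∈ Icc (0 : ℝ) 1) (x : ℕ) :
    HasGenFun (binomialWeight Θ x) fun u ↦ (Θ * u + (1 - Θ)) ^ x where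
  nonneg y :=
    mul_nonneg (mul_nonneg (Nat.cast_nonneg _) (pow_nonneg hΘ.1 y))
      (pow_nonneg (sub_nonneg.2 hΘ.2) _)
  hasSum u _ := hasSum_binomialWeight_mul_pow Θ u x

/-- Negative binomial weights of parameters `r + y` and `a`, shifted to start at `y`: the law of the
total population when `y` individuals and an immigrant source of weight `r` reproduce. -/
noncomputable def negBinomialWeight (r a : ℝ) (y z : ℕ) : ℝ :=
  if y ≤ z then
    Real.Gamma (z + r) / ((z - y).factorial * Real.Gamma (y + r)) * a ^ (z - y) * (1 - a) ^ (r + y)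
  else 0

theorem Gamma_add_natCast_div_Gamma_eq {s : ℝ} (hs : ∀ k : ℕ, s ≠ -k) (n : ℕ) :
    Real.Gamma (s + n) / Real.Gamma s = (ascPochhammer ℝ n).eval s := by
  have complex_ratio :=
    Complex.Gamma_add_nat_div_Gamma_eq (n := n) (s : ℂ) (by exact_mod_cast hs)
  have eval_cast : (ascPochhammer ℂ n).eval (s : ℂ) = ((ascPochhammer ℝ n).eval s : ℝ) := by
    rw [← ascPochhammer_map Complex.ofRealHom]
    exact Polynomial.eval_map_apply Complex.ofRealHom s
  rw [eval_cast, ← Complex.ofReal_natCast, ← Complex.ofReal_add, Complex.Gamma_ofReal,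
    Complex.Gamma_ofReal] at complex_ratio
  exact_mod_cast complex_ratio

theorem Gamma_natCast_add_div_eq_choose {s : ℝ} (hs : ∀ k : ℕ, s ≠ -k) (n : ℕ) :
    Real.Gamma (n + s) / (n.factorial * Real.Gamma s) = Ring.choose (s + n - 1) n := by
  have choose_eq : n.factorial * Ring.choose (s + n - 1) n = (ascPochhammer ℝ n).eval s := by
    rw [Ring.choose, show s + (n : ℝ) - 1 - n + 1 = s by ring, ← nsmul_eq_mul,
      Ring.factorial_nsmul_multichoose_eq_ascPochhammer, Polynomial.ascPochhammer_smeval_eq_eval]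
  rw [add_comm, mul_comm, ← div_div, Gamma_add_natCast_div_Gamma_eq hs, ← choose_eq]
  exact mul_div_cancel_left₀ _ (Nat.cast_ne_zero.2 n.factorial_ne_zero)

theorem hasSum_Gamma_div_factorial_mul_pow {s v : ℝ} (hs : ∀ k : ℕ, s ≠ -k) (hv : |v| < 1) :
    HasSum (fun n : ℕ ↦ Real.Gamma (n + s) / (n.factorial * Real.Gamma s) * v ^ n)
      (1 / (1 - v) ^ s) := by
  have h := (Real.one_div_one_sub_rpow_hasFPowerSeriesOnBall_zero s).hasSum (y := v)
    (by simpa [enorm_eq_nnnorm, ← NNReal.coe_lt_coe] using hv)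
  simpa only [zero_add, FormalMultilinearSeries.ofScalars_apply_eq, smul_eq_mul,
    Gamma_natCast_add_div_eq_choose hs] using h

theorem hasSum_negBinomialWeight_mul_pow {r a u : ℝ} (hr : ∀ k : ℕ, r ≠ -k) (ha : a < 1)
    (hau : |a * u| < 1) (y : ℕ) :
    HasSum (fun z ↦ negBinomialWeight r a y z * u ^ z)
      (((1 - a) / (1 - a * u)) ^ r * (u * ((1 - a) / (1 - a * u))) ^ y) := by
  have one_sub_a : 0 < 1 - a := sub_pos.2 ha
  have one_sub_au : 0 < 1 - a * u := sub_pos.2 (abs_lt.1 hau).2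
  have ne_neg (k : ℕ) : (y : ℝ) + r ≠ -k := fun h ↦ hr (k + y) (by push_cast; linarith)
  have vanish (z : ℕ) (hz : z ∉ range (· + y)) : negBinomialWeight r a y z * u ^ z = 0 := by
    have : ¬ y ≤ z := fun h ↦ hz ⟨z - y, Nat.sub_add_cancel h⟩
    rw [negBinomialWeight, if_neg this, zero_mul]
  have shifted_term (n : ℕ) : negBinomialWeight r a y (n + y) * u ^ (n + y) =
      (1 - a) ^ (r + y) * u ^ y * (Real.Gamma (n + (y + r)) /
        (n.factorial * Real.Gamma (y + r)) * (a * u) ^ n) := by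
    rw [negBinomialWeight, if_pos (Nat.le_add_left y n), Nat.add_sub_cancel, Nat.cast_add,
      add_assoc]
    ring
  have total : (1 - a) ^ (r + y) * u ^ y * (1 / (1 - a * u) ^ (y + r)) =
      ((1 - a) / (1 - a * u)) ^ r * (u * ((1 - a) / (1 - a * u))) ^ y := by
    rw [add_comm (y : ℝ) r, Real.rpow_add_natCast one_sub_a.ne',
      Real.rpow_add_natCast one_sub_au.ne', Real.div_rpow one_sub_a.le one_sub_au.le, mul_pow,
      div_pow]
    ring
  rw [← (add_left_injective y).hasSum_iff vanish]
  simpa only [Function.comp_def, shifted_term, total] using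
    (hasSum_Gamma_div_factorial_mul_pow ne_neg hau).mul_left ((1 - a) ^ (r + y) * u ^ y)

theorem hasGenFun_negBinomialWeight {r a : ℝ} (hr : 0 < r) (ha : a ∈ Ico (0 : ℝ) 1) (y : ℕ) :
    HasGenFun (negBinomialWeight r a y) fun u ↦
      ((1 - a) / (1 - a * u)) ^ r * (u * ((1 - a) / (1 - a * u))) ^ y where
  nonneg z := by
    have := ha.1
    have := Real.rpow_nonneg (sub_nonneg.2 ha.2.le) (r + y)
    have := Real.Gamma_pos_of_pos (by positivity : 0 < (z : ℝ) + r)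
    have := Real.Gamma_pos_of_pos (by positivity : 0 < (y : ℝ) + r)
    unfold negBinomialWeight
    positivity
  hasSum u hu := by
    refine hasSum_negBinomialWeight_mul_pow (fun k ↦ ?_) ha.2 ?_ y
    · exact ((neg_nonpos.2 k.cast_nonneg).trans_lt hr).ne'
    · rw [abs_mul, abs_of_nonneg ha.1]
      exact (mul_le_of_le_one_right ha.1 hu).trans_lt ha.2

theorem one_sub_mul_pos {a u : ℝ} (ha : a ∈ Ico (0 : ℝ) 1) (hu : |u| ≤ 1) : 0 < 1 - a * u :=
  sub_pos.2 ((mul_le_of_le_one_right ha.1 (abs_le.1 hu).2).trans_lt ha.2)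

theorem abs_mul_one_sub_div_le_one {a u : ℝ} (ha : a ∈ Ico (0 : ℝ) 1) (hu : |u| ≤ 1) :
    |u * ((1 - a) / (1 - a * u))| ≤ 1 := by
  have hau := one_sub_mul_pos ha hu
  obtain ⟨neg_one_le_u, u_le_one⟩ := abs_le.1 hu
  rw [← mul_div_assoc, abs_le, le_div_iff₀ hau, div_le_one hau]
  constructor <;> nlinarith [ha.1, ha.2]

theorem pKer_eq_mixture (r q Θ : ℝ) (x : ℕ) :
    pKer r q Θ x =
      fun z ↦ ∑' y, binomialWeight Θ x y * negBinomialWeight r (q * (1 - Θ)) y z := by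
  funext z
  rw [pKer, tsum_eq_sum (s := Finset.range (min x z + 1))]
  · refine Finset.sum_congr rfl fun y hy ↦ ?_
    have : y ≤ z := by rw [Finset.mem_range] at hy; omega
    rw [negBinomialWeight, if_pos this, binomialWeight]
    ring
  · intro y hy
    have : x < y ∨ ¬ y ≤ z := by rw [Finset.mem_range] at hy; omega
    rcases this with hxy | hyz
    · simp only [binomialWeight, Nat.choose_eq_zero_of_lt hxy, Nat.cast_zero, zero_mul]
    · rw [negBinomialWeight, if_neg hyz, mul_zero]

/-- The generating function `φ_Θ` of the descendants of a single individual, written so that the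
fixed point `1` is visible. -/
noncomputable def offspringGenFun (q Θ u : ℝ) : ℝ :=
  1 - Θ * (1 - u) / (1 - q * (1 - Θ) * u)

/-- The parameter of the composition of two kernels with parameters `Θ₁` and `Θ₂`, determined by
requiring the multipliers `Θ / (1 - q * (1 - Θ))` to multiply. -/
noncomputable def composedParam (q Θ₁ Θ₂ : ℝ) : ℝ :=
  Θ₁ * Θ₂ / (1 - q * (1 - Θ₁) * (1 - Θ₂))

section Offspring

variable {r q Θ Θ₁ Θ₂ u : ℝ}

theorem mul_one_sub_mem_Ico (hq : q ∈ Ico (0 : ℝ) 1) (hΘ : Θ ∈ Icc (0 : ℝ) 1) :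
    q * (1 - Θ) ∈ Ico (0 : ℝ) 1 :=
  ⟨mul_nonneg hq.1 (sub_nonneg.2 hΘ.2), by nlinarith [hq.1, hq.2, hΘ.1]⟩

theorem offspringGenFun_eq (h : 1 - q * (1 - Θ) * u ≠ 0) :
    offspringGenFun q Θ u =
      Θ * (u * ((1 - q * (1 - Θ)) / (1 - q * (1 - Θ) * u))) + (1 - Θ) := by
  rw [offspringGenFun]
  linear_combination -Θ * mul_inv_cancel₀ h

theorem one_sub_mul_offspringGenFun (h : 1 - q * (1 - Θ) * u ≠ 0) :
    1 - q * offspringGenFun q Θ u =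
      (1 - q * u) * ((1 - q * (1 - Θ)) / (1 - q * (1 - Θ) * u)) := by
  rw [offspringGenFun]
  linear_combination -(1 - q) * mul_inv_cancel₀ h

theorem abs_offspringGenFun_le_one (hq : q ∈ Ico (0 : ℝ) 1) (hΘ : Θ ∈ Icc (0 : ℝ) 1)
    (hu : |u| ≤ 1) : |offspringGenFun q Θ u| ≤ 1 := by
  have ha := mul_one_sub_mem_Ico hq hΘ
  rw [offspringGenFun_eq (one_sub_mul_pos ha hu).ne']
  obtain ⟨lower, upper⟩ := abs_le.1 (abs_mul_one_sub_div_le_one ha hu)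
  rw [abs_le]
  constructor <;> nlinarith [hΘ.1, hΘ.2]

theorem one_sub_mul_one_sub_mul_pos (hq : q ∈ Ico (0 : ℝ) 1) (hΘ₁ : Θ₁ ∈ Icc (0 : ℝ) 1)
    (hΘ₂ : Θ₂ ∈ Icc (0 : ℝ) 1) : 0 < 1 - q * (1 - Θ₁) * (1 - Θ₂) :=
  one_sub_mul_pos (mul_one_sub_mem_Ico hq hΘ₁)
    (abs_le.2 ⟨by linarith [hΘ₂.2], sub_le_self 1 hΘ₂.1⟩)

theorem composedParam_mem_Icc (hq : q ∈ Ico (0 : ℝ) 1) (hΘ₁ : Θ₁ ∈ Icc (0 : ℝ) 1)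
    (hΘ₂ : Θ₂ ∈ Icc (0 : ℝ) 1) : composedParam q Θ₁ Θ₂ ∈ Icc (0 : ℝ) 1 := by
  have hD := one_sub_mul_one_sub_mul_pos hq hΘ₁ hΘ₂
  refine ⟨div_nonneg (mul_nonneg hΘ₁.1 hΘ₂.1) hD.le, (div_le_one hD).2 ?_⟩
  have q_mul_le : q * ((1 - Θ₁) * (1 - Θ₂)) ≤ (1 - Θ₁) * (1 - Θ₂) :=
    mul_le_of_le_one_left (mul_nonneg (sub_nonneg.2 hΘ₁.2) (sub_nonneg.2 hΘ₂.2)) hq.2.le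
  nlinarith [mul_nonneg hΘ₁.1 (sub_nonneg.2 hΘ₂.2), mul_nonneg hΘ₂.1 (sub_nonneg.2 hΘ₁.2)]

theorem offspringGenFun_comp (hD : 1 - q * (1 - Θ₁) * (1 - Θ₂) ≠ 0)
    (hu : 1 - q * (1 - Θ₂) * u ≠ 0) :
    offspringGenFun q Θ₁ (offspringGenFun q Θ₂ u) =
      offspringGenFun q (composedParam q Θ₁ Θ₂) u := by
  have one_sub_inner : 1 - offspringGenFun q Θ₂ u = Θ₂ * (1 - u) / (1 - q * (1 - Θ₂) * u) :=
    sub_sub_cancel _ _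
  have denominators :
      (1 - q * (1 - Θ₂) * u) * (1 - q * (1 - Θ₁) * offspringGenFun q Θ₂ u) =
        (1 - q * (1 - Θ₁) * (1 - Θ₂)) * (1 - q * (1 - composedParam q Θ₁ Θ₂) * u) := by
    rw [offspringGenFun, composedParam]
    linear_combination (q * (1 - Θ₁) * Θ₂ * (1 - u)) * mul_inv_cancel₀ hu -
      q * Θ₁ * Θ₂ * u * mul_inv_cancel₀ hD
  rw [offspringGenFun, one_sub_inner, ← mul_div_assoc, div_div, denominators, ← div_div,
    offspringGenFun, composedParam]
  ring

theorem hasGenFun_pKer (hr : 0 < r) (hq : q ∈ Ico (0 : ℝ) 1) (hΘ : Θ ∈ Icc (0 : ℝ) 1) (x : ℕ) :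
    HasGenFun (pKer r q Θ x) fun u ↦
      ((1 - q * offspringGenFun q Θ u) / (1 - q * u)) ^ r * offspringGenFun q Θ u ^ x := by
  have ha := mul_one_sub_mem_Ico hq hΘ
  rw [pKer_eq_mixture]
  refine ((hasGenFun_binomialWeight hΘ x).mixture (hasGenFun_negBinomialWeight hr ha)
    fun u ↦ abs_mul_one_sub_div_le_one ha).congr fun u hu ↦ ?_
  have hau := (one_sub_mul_pos ha hu).ne'
  rw [one_sub_mul_offspringGenFun hau, mul_div_cancel_left₀ _ (one_sub_mul_pos hq hu).ne',
    ← offspringGenFun_eq hau]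

end Offspring

theorem hasSum_pKer_mul_pKer {r q Θ₁ Θ₂ : ℝ} (hr : 0 < r) (hq : q ∈ Ico (0 : ℝ) 1)
    (hΘ₁ : Θ₁ ∈ Icc (0 : ℝ) 1) (hΘ₂ : Θ₂ ∈ Icc (0 : ℝ) 1) (x z : ℕ) :
    HasSum (fun y ↦ pKer r q Θ₁ x y * pKer r q Θ₂ y z) (pKer r q (composedParam q Θ₁ Θ₂) x z) := by
  have first := hasGenFun_pKer hr hq hΘ₁ x
  have second := hasGenFun_pKer hr hq hΘ₂
  have maps (u : ℝ) (hu : |u| ≤ 1) := abs_offspringGenFun_le_one hq hΘ₂ hu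
  have composed := hasGenFun_pKer hr hq (composedParam_mem_Icc hq hΘ₁ hΘ₂) x
  have tsum_eq : (fun z ↦ ∑' y, pKer r q Θ₁ x y * pKer r q Θ₂ y z) =
      pKer r q (composedParam q Θ₁ Θ₂) x := by
    refine ((first.mixture second maps).congr fun u hu ↦ ?_).unique composed
    have hD := one_sub_mul_one_sub_mul_pos hq hΘ₁ hΘ₂
    have hΘ₂u := one_sub_mul_pos (mul_one_sub_mem_Ico hq hΘ₂) hu
    have hqu := one_sub_mul_pos hq hu
    have hqv := one_sub_mul_pos hq (maps u hu)
    have hqw := one_sub_mul_pos hq (abs_offspringGenFun_le_one hq hΘ₁ (maps u hu))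
    rw [← mul_assoc, ← Real.mul_rpow (div_pos hqv hqu).le (div_pos hqw hqv).le,
      mul_comm (_ / _), div_mul_div_cancel₀ hqv.ne', offspringGenFun_comp hD.ne' hΘ₂u.ne']
  rw [← tsum_eq]
  exact (first.summable_mul second (maps 1 abs_one.le) z).hasSum

theorem composedParam_div_sub {q E D : ℝ} (hq : q ≠ 1) (hE : E ≠ q) (hD : D ≠ q) :
    composedParam q ((1 - q) / (E - q)) ((1 - q) / (D - q)) = (1 - q) / (E * D - q) := by
  have hq' : 1 - q ≠ 0 := sub_ne_zero.2 hq.symm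
  have hE' : E - q ≠ 0 := sub_ne_zero.2 hE
  have hD' : D - q ≠ 0 := sub_ne_zero.2 hD
  have denominator : 1 - q * (1 - (1 - q) / (E - q)) * (1 - (1 - q) / (D - q)) =
      (1 - q) * (E * D - q) / ((E - q) * (D - q)) := by
    field_simp
    ring
  rw [composedParam, denominator, div_mul_div_comm, div_div_div_cancel_right₀ (mul_ne_zero hE' hD'),
    mul_div_mul_left _ _ hq']

theorem div_sub_mem_Icc {q E : ℝ} (hq : q < 1) (hE : 1 ≤ E) : (1 - q) / (E - q) ∈ Icc (0 : ℝ) 1 :=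
  ⟨div_nonneg (by linarith) (by linarith), div_le_one_of_le₀ (by linarith) (by linarith)⟩

/-- With Θ_t = (1-q)/(e^{ct}-q), the family p_t := p_{Θ_t} satisfies the
    Chapman–Kolmogorov equations: ∑_y p_t(x,y) p_s(y,z) = p_{t+s}(x,z). -/
theorem pKer_chapman_kolmogorov
    (r q c : ℝ) (hr : 0 < r) (hq : q ∈ Set.Ioo (0 : ℝ) 1) (hc : 0 < c)
    (t s : ℝ) (ht : 0 < t) (hs : 0 < s) (x z : ℕ) :
    HasSum
      (fun y : ℕ =>
        pKer r q ((1 - q) / (Real.exp (c * t) - q)) x y *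
          pKer r q ((1 - q) / (Real.exp (c * s) - q)) y z)
      (pKer r q ((1 - q) / (Real.exp (c * (t + s)) - q)) x z) := by
  have one_le_exp {τ : ℝ} (hτ : 0 < τ) : 1 ≤ Real.exp (c * τ) :=
    Real.one_le_exp (mul_pos hc hτ).le
  have exp_ne {τ : ℝ} (hτ : 0 < τ) : Real.exp (c * τ) ≠ q := (hq.2.trans_le (one_le_exp hτ)).ne'
  have h := hasSum_pKer_mul_pKer hr (Ioo_subset_Ico_self hq)
    (div_sub_mem_Icc hq.2 (one_le_exp ht)) (div_sub_mem_Icc hq.2 (one_le_exp hs)) x z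
  rwa [composedParam_div_sub hq.2.ne (exp_ne ht) (exp_ne hs), ← Real.exp_add, ← mul_add] at h
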